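/- arXiv:1010.5077 — 2 statements merged into one kernel-verified Lean document; each statement's English description precedes it below -/
import Mathlib

section
/- Let c ∈ SL(3,ℤ) be the permutation matrix of the 3-cycle e₁ ↦ e₂ ↦ e₃ ↦ e₁ (which has determinant 1). Then Σ ∩ cΣc⁻¹ ∩ c²Σc⁻² equals the subgroup of diagonal matrices in SL(3,ℤ), i.e. the matrices diag(ε₁,ε₂,ε₃) with εᵢ ∈ {±1} and ε₁ε₂ε₃ = 1; in particular this intersection of three conjugates of Σ is a finite group (of order 4). -/
open Matrix

/-- `Σ < SL(3,ℤ)`: the subgroup of matrices `g` with `g₃₁ = g₃₂ = 0`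
(third row, first and second columns). -/
def Sigma3 : Subgroup (Matrix.SpecialLinearGroup (Fin 3) ℤ) where
  carrier := {g | g.1 2 0 = 0 ∧ g.1 2 1 = 0}
  one_mem' := by simp
  mul_mem' := by
    rintro a b ⟨ha0, ha1⟩ ⟨hb0, hb1⟩
    constructor <;>
      simp [Matrix.SpecialLinearGroup.coe_mul, Matrix.mul_apply, Fin.sum_univ_three,
        ha0, ha1, hb0, hb1]
  inv_mem' := by
    rintro a ⟨ha0, ha1⟩
    constructor <;>
      simp [Matrix.SpecialLinearGroup.coe_inv, Matrix.adjugate_fin_three, ha0, ha1]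

/-- `P ≤ Σ`: the subgroup of matrices `[[1,0,x],[0,1,y],[0,0,1]]` with `x, y ∈ ℤ`. -/
def P3 : Subgroup (Matrix.SpecialLinearGroup (Fin 3) ℤ) where
  carrier := {g | ∃ x y : ℤ, g.1 = !![1, 0, x; 0, 1, y; 0, 0, 1]}
  one_mem' := ⟨0, 0, by
    ext i j
    fin_cases i <;> fin_cases j <;>
      simp [Matrix.vecHead, Matrix.vecTail]⟩
  mul_mem' := by
    rintro a b ⟨x, y, ha⟩ ⟨x', y', hb⟩
    refine ⟨x + x', y + y', ?_⟩
    have : a.1 * b.1 = !![1, 0, x + x'; 0, 1, y + y'; 0, 0, 1] := by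
      rw [ha, hb]
      ext i j
      fin_cases i <;> fin_cases j <;>
        simp [Matrix.mul_apply, Fin.sum_univ_three, Matrix.vecHead, Matrix.vecTail, add_comm]
    simpa using this
  inv_mem' := by
    rintro a ⟨x, y, ha⟩
    refine ⟨-x, -y, ?_⟩
    rw [Matrix.SpecialLinearGroup.coe_inv, ha]
    ext i j
    fin_cases i <;> fin_cases j <;>
      simp [Matrix.adjugate_fin_three, Matrix.vecHead, Matrix.vecTail]

/-- The permutation matrix `c ∈ SL(3,ℤ)` of the 3-cycle `e₁ ↦ e₂ ↦ e₃ ↦ e₁`. -/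
def cMat : Matrix.SpecialLinearGroup (Fin 3) ℤ :=
  ⟨!![0, 0, 1; 1, 0, 0; 0, 1, 0], by rw [Matrix.det_fin_three]; rfl⟩

/-- The intersection `Σ ∩ cΣc⁻¹ ∩ c²Σc⁻²`. -/
def K8 : Subgroup (Matrix.SpecialLinearGroup (Fin 3) ℤ) :=
  Sigma3 ⊓ Sigma3.map (MulAut.conj cMat).toMonoidHom ⊓
    Sigma3.map (MulAut.conj (cMat ^ 2)).toMonoidHom

theorem mem_K8_iff (g : Matrix.SpecialLinearGroup (Fin 3) ℤ) :
    g ∈ K8 ↔ ∀ i j, i ≠ j → g.1 i j = 0 := by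
  have hS : ∀ h : Matrix.SpecialLinearGroup (Fin 3) ℤ,
      h ∈ Sigma3 ↔ h.1 2 0 = 0 ∧ h.1 2 1 = 0 := fun _ => Iff.rfl
  have hi : (cMat⁻¹).1 = !![0, 1, 0; 0, 0, 1; 1, 0, 0] := by
    decide +kernel
  have hc : cMat.1 = !![0, 0, 1; 1, 0, 0; 0, 1, 0] := rfl
  have hconj : ∀ (a h : Matrix.SpecialLinearGroup (Fin 3) ℤ),
      h ∈ Sigma3.map (MulAut.conj a).toMonoidHom ↔ a⁻¹ * h * a ∈ Sigma3 := by
    intro a h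
    rw [Subgroup.mem_map_equiv, MulAut.conj_symm_apply]
  have h1 : ∀ (h : Matrix.SpecialLinearGroup (Fin 3) ℤ),
      (cMat⁻¹ * h * cMat).1 = !![h.1 1 1, h.1 1 2, h.1 1 0;
        h.1 2 1, h.1 2 2, h.1 2 0; h.1 0 1, h.1 0 2, h.1 0 0] := by
    intro h
    change (cMat⁻¹).1 * h.1 * cMat.1 = _
    rw [hi, hc]
    ext i j
    fin_cases i <;> fin_cases j <;>
      simp [Matrix.mul_apply, Matrix.vecMul, dotProduct, Fin.sum_univ_three]
  have h2 : (cMat ^ 2)⁻¹ * g * cMat ^ 2 = cMat⁻¹ * (cMat⁻¹ * g * cMat) * cMat := by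
    simp only [pow_two, _root_.mul_inv_rev, mul_assoc]
  unfold K8
  rw [Subgroup.mem_inf, Subgroup.mem_inf, hconj, hconj, h2, hS, hS, hS, h1, h1, h1]
  simp [Fin.forall_fin_succ]
  tauto

theorem mem_K8_iff' (g : Matrix.SpecialLinearGroup (Fin 3) ℤ) :
    g ∈ K8 ↔ ∃ ε : Fin 3 → ℤ,
        (∀ i, ε i = 1 ∨ ε i = -1) ∧ ε 0 * ε 1 * ε 2 = 1 ∧ g.1 = Matrix.diagonal ε := by
  rw [mem_K8_iff]
  constructor
  · intro h
    have hd : g.1 = Matrix.diagonal (fun i => g.1 i i) := by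
      ext i j
      by_cases hij : i = j
      · subst hij; simp
      · rw [h i j hij, Matrix.diagonal_apply_ne _ hij]
    have hp : g.1 0 0 * g.1 1 1 * g.1 2 2 = 1 := by
      have := g.2
      rw [hd, Matrix.det_diagonal, Fin.prod_univ_three] at this
      exact this
    refine ⟨fun i => g.1 i i, ?_, hp, hd⟩
    intro i
    apply Int.isUnit_iff.mp
    apply isUnit_of_dvd_one
    refine Dvd.dvd.trans ?_ (dvd_of_eq hp)
    fin_cases i
    · exact ⟨g.1 1 1 * g.1 2 2, by simp; ring⟩
    · exact ⟨g.1 0 0 * g.1 2 2, by simp; ring⟩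
    · exact ⟨g.1 0 0 * g.1 1 1, by simp; ring⟩
  · rintro ⟨ε, -, -, h⟩ i j hij
    rw [h, Matrix.diagonal_apply_ne _ hij]

/-- The diagonal matrix `diag(a, b, ab)`. -/
def diagK8 (p : ℤˣ × ℤˣ) : Matrix.SpecialLinearGroup (Fin 3) ℤ :=
  ⟨Matrix.diagonal ![(p.1 : ℤ), (p.2 : ℤ), (p.1 : ℤ) * p.2], by
    rw [Matrix.det_diagonal, Fin.prod_univ_three]
    rcases Int.units_eq_one_or p.1 with h | h <;>
      rcases Int.units_eq_one_or p.2 with h' | h' <;> simp [h, h']⟩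

theorem card_K8 : Nat.card K8 = 4 := by
  have hmem : ∀ p, diagK8 p ∈ K8 := by
    intro p
    rw [mem_K8_iff]
    intro i j hij
    exact Matrix.diagonal_apply_ne _ hij
  have hb : Function.Bijective (fun p : ℤˣ × ℤˣ => (⟨diagK8 p, hmem p⟩ : K8)) := by
    constructor
    · rintro p q hpq
      have h : diagK8 p = diagK8 q := congrArg Subtype.val hpq
      have h' : (diagK8 p).1 = (diagK8 q).1 := congrArg Subtype.val h
      have h'' := Matrix.diagonal_injective h'
      have h0 := congrFun h'' 0
      have h1 := congrFun h'' 1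
      simp at h0 h1
      exact Prod.ext (Units.ext h0) (Units.ext h1)
    · rintro ⟨g, hg⟩
      obtain ⟨ε, hε, hp, hd⟩ := (mem_K8_iff' g).mp hg
      obtain ⟨a, ha⟩ := Int.isUnit_iff.mpr (hε 0)
      obtain ⟨b, hb⟩ := Int.isUnit_iff.mpr (hε 1)
      refine ⟨(a, b), Subtype.ext (Subtype.ext ?_)⟩
      change Matrix.diagonal ![(a : ℤ), (b : ℤ), (a : ℤ) * b] = g.1
      rw [hd]
      congr 1
      ext i
      fin_cases i
      · simpa using ha
      · simpa using hb
      · rcases hε 0 with h0 | h0 <;> rcases hε 1 with h1 | h1 <;>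
          simp [h0, h1, ha, hb] at hp ⊢ <;> omega
  rw [← Nat.card_congr (Equiv.ofBijective _ hb), Nat.card_eq_fintype_card]
  decide

/-- `c` is the permutation matrix sending `e₁ ↦ e₂ ↦ e₃ ↦ e₁`, and
`Σ ∩ cΣc⁻¹ ∩ c²Σc⁻²` equals the subgroup of diagonal matrices of `SL(3,ℤ)`, i.e. the
matrices `diag(ε₁,ε₂,ε₃)` with `εᵢ ∈ {±1}` and `ε₁ε₂ε₃ = 1`; in particular this
intersection of three conjugates of `Σ` is a finite group of order `4`. -/
theorem stmt8 :
    cMat.1.mulVec (Pi.single 0 1) = (Pi.single 1 1 : Fin 3 → ℤ) ∧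
    cMat.1.mulVec (Pi.single 1 1) = (Pi.single 2 1 : Fin 3 → ℤ) ∧
    cMat.1.mulVec (Pi.single 2 1) = (Pi.single 0 1 : Fin 3 → ℤ) ∧
    (∀ g : Matrix.SpecialLinearGroup (Fin 3) ℤ,
      g ∈ K8 ↔ ∀ i j, i ≠ j → g.1 i j = 0) ∧
    (∀ g : Matrix.SpecialLinearGroup (Fin 3) ℤ,
      g ∈ K8 ↔ ∃ ε : Fin 3 → ℤ,
        (∀ i, ε i = 1 ∨ ε i = -1) ∧ ε 0 * ε 1 * ε 2 = 1 ∧ g.1 = Matrix.diagonal ε) ∧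
    (K8 : Set (Matrix.SpecialLinearGroup (Fin 3) ℤ)).Finite ∧
    Nat.card K8 = 4 := by
  refine ⟨?_, ?_, ?_, mem_K8_iff, mem_K8_iff', ?_, card_K8⟩
  · decide +kernel
  · decide +kernel
  · decide +kernel
  · have : Finite K8 := Nat.finite_of_card_ne_zero (by rw [card_K8]; norm_num)
    exact Set.toFinite _
end

section
/- There exist finitely many elements g₁, …, g_m ∈ SL(n,ℤ) such that the intersection g₁ Σ g₁⁻¹ ∩ ⋯ ∩ g_m Σ g_m⁻¹ of the corresponding conjugates of Σ is a finite group. -/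
open Matrix

/-- For `g ∈ SL(n,ℤ)`, the coercion of `g⁻¹` is the nonsingular inverse of the
coercion of `g`. -/
lemma slCoeInv {n : ℕ} (g : Matrix.SpecialLinearGroup (Fin n) ℤ) :
    (g⁻¹).1 = (g.1)⁻¹ := by
  rw [Matrix.SpecialLinearGroup.coe_inv, Matrix.inv_def, g.2, Ring.inverse_one, one_smul]

/-- `Σ ≤ SL(n,ℤ)`: the subgroup of block upper triangular matrices (with respect to the
block structure given by `β : Fin n → Fin r`, assigning to each index its block), i.e.
matrices all of whose entries below the diagonal blocks vanish. -/
def SigmaB {n r : ℕ} (β : Fin n → Fin r) :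
    Subgroup (Matrix.SpecialLinearGroup (Fin n) ℤ) where
  carrier := {g | g.1.BlockTriangular β}
  one_mem' := Matrix.blockTriangular_one
  mul_mem' := by
    intro a b ha hb
    show (a * b).1.BlockTriangular β
    rw [Matrix.SpecialLinearGroup.coe_mul]
    exact ha.mul hb
  inv_mem' := by
    intro g hg
    have : Invertible g.1 := g.1.invertibleOfIsUnitDet (by rw [g.2]; exact isUnit_one)
    show (g⁻¹).1.BlockTriangular β
    rw [slCoeInv]
    exact Matrix.blockTriangular_inv_of_blockTriangular hg

/-- `G ≤ SL(n,ℤ)`: the subgroup of block diagonal matrices, i.e. matrices all of whose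
entries outside the diagonal blocks vanish. -/
def GB {n r : ℕ} (β : Fin n → Fin r) :
    Subgroup (Matrix.SpecialLinearGroup (Fin n) ℤ) where
  carrier := {g | ∀ i j, β i ≠ β j → g.1 i j = 0}
  one_mem' := fun i j hij => Matrix.one_apply_ne (fun e => hij (congrArg β e))
  mul_mem' := by
    intro a b ha hb i j hij
    have ha' : a.1.BlockTriangular β := fun k l h => ha k l (ne_of_gt h)
    have ha'' : a.1.BlockTriangular (OrderDual.toDual ∘ β) :=
      fun k l h => ha k l (ne_of_lt h)
    have hb' : b.1.BlockTriangular β := fun k l h => hb k l (ne_of_gt h)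
    have hb'' : b.1.BlockTriangular (OrderDual.toDual ∘ β) :=
      fun k l h => hb k l (ne_of_lt h)
    have h1 := ha'.mul hb'
    have h2 := ha''.mul hb''
    rcases hij.lt_or_gt with h | h
    · exact (Matrix.SpecialLinearGroup.coe_mul a b) ▸ h2 h
    · exact (Matrix.SpecialLinearGroup.coe_mul a b) ▸ h1 h
  inv_mem' := by
    intro g hg i j hij
    have : Invertible g.1 := g.1.invertibleOfIsUnitDet (by rw [g.2]; exact isUnit_one)
    have hg' : g.1.BlockTriangular β := fun k l h => hg k l (ne_of_gt h)
    have hg'' : g.1.BlockTriangular (OrderDual.toDual ∘ β) :=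
      fun k l h => hg k l (ne_of_lt h)
    have h1 := Matrix.blockTriangular_inv_of_blockTriangular hg'
    have h2 := Matrix.blockTriangular_inv_of_blockTriangular hg''
    show (g⁻¹).1 i j = 0
    rw [slCoeInv]
    rcases hij.lt_or_gt with h | h
    · exact h2 h
    · exact h1 h

/-- Multiplying a block upper triangular matrix whose diagonal blocks are identity
matrices with a block upper triangular matrix does not change the entries inside the
diagonal blocks. -/
lemma keyB {n r : ℕ} {β : Fin n → Fin r} {a c : Matrix (Fin n) (Fin n) ℤ}
    (ha1 : a.BlockTriangular β)
    (ha2 : ∀ i j, β i = β j → a i j = (1 : Matrix (Fin n) (Fin n) ℤ) i j)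
    (hc : c.BlockTriangular β) {i j : Fin n} (hij : β i = β j) :
    (a * c) i j = c i j := by
  rw [Matrix.mul_apply, Finset.sum_eq_single i]
  · rw [ha2 i i rfl, Matrix.one_apply_eq, one_mul]
  · intro k _ hk
    rcases lt_trichotomy (β k) (β i) with h | h | h
    · rw [ha1 h, zero_mul]
    · rw [ha2 i k h.symm, Matrix.one_apply_ne (Ne.symm hk), zero_mul]
    · rw [hc (hij ▸ h), mul_zero]
  · intro h
    exact absurd (Finset.mem_univ i) h

/-- A signed permutation matrix in `SL(n,ℤ)` realising a pair of prescribed positions. -/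
lemma exists_signed_perm {n : ℕ} (i j a b : Fin n) (hij : i ≠ j) (hab : a ≠ b) :
    ∃ g : Matrix.SpecialLinearGroup (Fin n) ℤ,
      (∀ k, k ≠ j → g.1 k b = 0) ∧ g.1 j b ≠ 0 ∧ (∀ l, l ≠ a → g.1 i l = 0) := by
  obtain ⟨σ, hi, hj⟩ : ∃ σ : Equiv.Perm (Fin n), σ i = a ∧ σ j = b := by
    let τ := Equiv.swap i a
    refine ⟨Equiv.swap (τ j) b * τ, ?_, ?_⟩
    · have h1 : τ i = a := Equiv.swap_apply_left i a
      rw [Equiv.Perm.mul_apply, h1]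
      apply Equiv.swap_apply_of_ne_of_ne
      · intro h
        exact hij (τ.injective (h1.trans h))
      · exact hab
    · rw [Equiv.Perm.mul_apply, Equiv.swap_apply_left]
  let d : Fin n → ℤ := fun k => if k = i then (Equiv.Perm.sign σ : ℤ) else 1
  let M : Matrix (Fin n) (Fin n) ℤ := Matrix.diagonal d * Equiv.Perm.permMatrix ℤ σ
  have hM : ∀ k l, M k l = d k * (if σ k = l then 1 else 0) := by
    intro k l
    simp only [M, Matrix.diagonal_mul, Equiv.Perm.permMatrix, PEquiv.toMatrix_apply]
    simp [Equiv.toPEquiv_apply, eq_comm]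
  have hdet : M.det = 1 := by
    simp only [M, Matrix.det_mul, Matrix.det_diagonal, Matrix.det_permutation, d]
    rw [Finset.prod_ite_eq' Finset.univ i (fun _ => (Equiv.Perm.sign σ : ℤ))]
    simp [← Units.val_mul]
  refine ⟨⟨M, hdet⟩, ?_, ?_, ?_⟩
  · intro k hk
    change M k b = 0
    rw [hM, if_neg, mul_zero]
    intro h
    exact hk (σ.injective (h.trans hj.symm))
  · change M j b ≠ 0
    rw [hM, if_pos hj]
    simp [d, hij.symm]
  · intro l hl
    change M i l = 0
    rw [hM, if_neg, mul_zero]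
    intro h
    exact hl (h.symm.trans hi)

/-- Every block is nonempty. -/
lemma block_surj {r n : ℕ} (m : Fin r → ℕ) (hm : ∀ b, 0 < m b)
    (hsum : ∑ b, m b = n) (β : Fin n → Fin r)
    (hβ : ∀ (i : Fin n) (b : Fin r), β i = b ↔
      (∑ k ∈ Finset.univ.filter (fun k => k < b), m k ≤ (i : ℕ) ∧
        (i : ℕ) < ∑ k ∈ Finset.univ.filter (fun k => k ≤ b), m k)) (b : Fin r) :
    ∃ i, β i = b := by
  have h1 : ∑ k ∈ Finset.univ.filter (fun k => k < b), m k
      < ∑ k ∈ Finset.univ.filter (fun k => k ≤ b), m k := by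
    apply Finset.sum_lt_sum_of_subset (i := b)
    · intro k hk
      simp only [Finset.mem_filter, Finset.mem_univ, true_and] at hk ⊢
      exact hk.le
    · simp
    · simp
    · exact hm b
    · intros; exact Nat.zero_le _
  have h2 : ∑ k ∈ Finset.univ.filter (fun k => k ≤ b), m k ≤ n := by
    rw [← hsum]
    exact Finset.sum_le_sum_of_subset (Finset.filter_subset _ _)
  exact ⟨⟨_, h1.trans_le h2⟩, (hβ _ _).2 ⟨le_rfl, h1⟩⟩

/-- The diagonal matrices in `SL(n,ℤ)` form a finite set. -/
lemma diag_finite (n : ℕ) :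
    {x : Matrix.SpecialLinearGroup (Fin n) ℤ | ∀ i j, i ≠ j → x.1 i j = 0}.Finite := by
  have hfin : (Set.pi Set.univ (fun _ : Fin n => Set.pi Set.univ
      (fun _ : Fin n => Set.Icc (-1 : ℤ) 1))).Finite :=
    Set.Finite.pi' (fun _ => Set.Finite.pi' (fun _ => Set.finite_Icc _ _)) |>.subset
      (by intro x hx i j; exact hx i trivial j trivial)
  refine (hfin.preimage (f := fun x : Matrix.SpecialLinearGroup (Fin n) ℤ => fun i j => x.1 i j)
    ?_).subset ?_
  · intro x _ y _ h
    exact Subtype.ext h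
  · intro x hx i _ j _
    change x.1 i j ∈ Set.Icc (-1 : ℤ) 1
    by_cases hij : i = j
    · subst hij
      have hd : x.1 = Matrix.diagonal (fun k => x.1 k k) := by
        ext k l
        by_cases h : k = l
        · subst h; simp
        · rw [Matrix.diagonal_apply_ne _ h]; exact hx k l h
      have h1 : ∏ k, x.1 k k = 1 := by
        rw [← Matrix.det_diagonal, ← hd]; exact x.2
      have h2 : x.1 i i ∣ 1 :=
        (Finset.dvd_prod_of_mem (fun k => x.1 k k) (Finset.mem_univ i)).trans (dvd_of_eq h1)
      rcases Int.isUnit_iff.1 (isUnit_of_dvd_one h2) with h | h <;> rw [h] <;> simp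
    · rw [hx i j hij]; simp

/-- There exist finitely many elements `g₁, …, g_m ∈ SL(n,ℤ)` such that
`g₁ Σ g₁⁻¹ ∩ ⋯ ∩ g_m Σ g_m⁻¹` is a finite group, where `Σ ≤ SL(n,ℤ)` is the subgroup of
block upper triangular matrices (with respect to a partition into `r` consecutive blocks
of positive sizes `m₁, …, m_r`, encoded by the block-assignment function `β`). -/
theorem stmt11 (r n : ℕ) (hr : 2 ≤ r) (m : Fin r → ℕ) (hm : ∀ b, 0 < m b)
    (hsum : ∑ b, m b = n) (β : Fin n → Fin r)
    (hβ : ∀ (i : Fin n) (b : Fin r), β i = b ↔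
      (∑ k ∈ Finset.univ.filter (fun k => k < b), m k ≤ (i : ℕ) ∧
        (i : ℕ) < ∑ k ∈ Finset.univ.filter (fun k => k ≤ b), m k)) :
    ∃ (N : ℕ) (g : Fin N → Matrix.SpecialLinearGroup (Fin n) ℤ), 0 < N ∧
      ((⨅ i : Fin N, (SigmaB β).map (MulAut.conj (g i)).toMonoidHom :
          Subgroup (Matrix.SpecialLinearGroup (Fin n) ℤ)) :
        Set (Matrix.SpecialLinearGroup (Fin n) ℤ)).Finite := by
  obtain ⟨b, hb⟩ := block_surj m hm hsum β hβ ⟨0, by omega⟩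
  obtain ⟨a, ha⟩ := block_surj m hm hsum β hβ ⟨1, by omega⟩
  have hlt : β b < β a := by rw [ha, hb]; simp [Fin.lt_def]
  have hab : a ≠ b := by
    rintro rfl
    exact lt_irrefl _ hlt
  have hex : ∀ p : Fin n × Fin n, ∃ g : Matrix.SpecialLinearGroup (Fin n) ℤ, p.1 ≠ p.2 →
      ((∀ k, k ≠ p.2 → g.1 k b = 0) ∧ g.1 p.2 b ≠ 0 ∧ (∀ l, l ≠ a → g.1 p.1 l = 0)) := by
    intro p
    by_cases h : p.1 = p.2
    · exact ⟨1, fun h' => absurd h h'⟩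
    · obtain ⟨g, hg⟩ := exists_signed_perm p.1 p.2 a b h hab
      exact ⟨g, fun _ => hg⟩
  choose G hG using hex
  let e := Fintype.equivFin (Fin n × Fin n)
  refine ⟨Fintype.card (Fin n × Fin n), fun t => G (e.symm t), ?_, ?_⟩
  · exact Fintype.card_pos_iff.2 ⟨(a, b)⟩
  · refine (diag_finite n).subset ?_
    intro x hx i j hij
    obtain ⟨h1, h2, h3⟩ := hG (i, j) hij
    have hx' := (Subgroup.mem_iInf.1 hx) (e (i, j))
    obtain ⟨y, hy, hyx⟩ := Subgroup.mem_map.1 hx'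
    simp only [Equiv.symm_apply_apply] at hyx
    have hyx' : G (i, j) * y * (G (i, j))⁻¹ = x := hyx
    have hmul : G (i, j) * y = x * G (i, j) := by rw [← hyx']; group
    have hent : ((G (i, j)).1 * y.1) i b = (x.1 * (G (i, j)).1) i b := by
      rw [← Matrix.SpecialLinearGroup.coe_mul, ← Matrix.SpecialLinearGroup.coe_mul, hmul]
    have hy0 : y.1 a b = 0 := hy hlt
    rw [Matrix.mul_apply, Matrix.mul_apply, Finset.sum_eq_single a, Finset.sum_eq_single j,
      hy0, mul_zero] at hent
    · exact (mul_eq_zero.1 hent.symm).resolve_right h2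
    · intro k _ hk
      rw [h1 k hk, mul_zero]
    · intro h; exact absurd (Finset.mem_univ _) h
    · intro k _ hk
      rw [h3 k hk, zero_mul]
    · intro h; exact absurd (Finset.mem_univ _) h
end
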